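/- arXiv:2005.13223 — 2 statements merged into one kernel-verified Lean document; each statement's English description precedes it below -/
import Mathlib

section
/- Let q be a real number with 0 < q and q ≠ 1, let h₁, l₁, l₂, α₁, λ be real numbers and t₁, t₂ nonzero reals. Assume λ + α₁ = -N for some positive integer N (so (q^{λ+α₁};q)_n = 0 for all n > N and the series below is a finite sum), and assume q^{h₁-l₂+n}·t₁/t₂ ≠ 1 for all integers 1 ≤ n ≤ N and q^{h₁-l₁+k} ≠ 1 for all integers 1 ≤ k ≤ N. Then the function g(x) = x^{-α₁} · Σ_{n=0}^{N} (q^{h₁+1/2}t₁/x;q)_n · [(q^{λ+α₁};q)_n / (q^{h₁-l₂+1}·t₁/t₂;q)_n] · q^n · Σ_{k=0}^{n} q^{k(k+1)/2} · (-q^{h₁-l₂}·t₁/t₂)^k / ((q^{h₁-l₁+1};q)_k (q;q)_k (q;q)_{n-k}) satisfies the variant of the confluent q-hypergeometric equation of type (2,1) for all x > 0. -/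
/-- The finite q-shifted factorial `(a;q)_n = ∏_{i=0}^{n-1} (1 - a q^i)`. -/
noncomputable def qPoch (q a : ℝ) (n : ℕ) : ℝ :=
  ∏ i ∈ Finset.range n, (1 - a * q ^ i)

/-- The variant of the confluent q-hypergeometric equation of type (2,1) (for `x > 0`). -/
def confEq21 (q h₁ l₁ l₂ α₁ lam t₁ t₂ : ℝ) (g : ℝ → ℝ) : Prop :=
  ∀ x : ℝ, 0 < x →
    (x - q ^ (l₁ - 1/2) * t₁) * (x - q ^ (l₂ - 1/2) * t₂) * g (q * x)
    - q ^ (-h₁ + l₁ + l₂ + 2 * lam - 1/2) * t₂ * (x - q ^ (h₁ + 1/2) * t₁) * g (x / q)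
    - (q ^ (-α₁) * x ^ 2
        - q ^ (l₁ + l₂ + lam - 1/2) * (q ^ (-l₂) * t₁ + (q ^ (-h₁) + q ^ (-l₁)) * t₂) * x
        + q ^ (l₁ + l₂ + lam) * (1 + q⁻¹) * t₁ * t₂) * g x = 0


lemma qPoch_succ (q a : ℝ) (n : ℕ) : qPoch q a (n+1) = qPoch q a n * (1 - a * q ^ n) := by
  simp [qPoch, Finset.prod_range_succ]

lemma qPoch_zero (q a : ℝ) : qPoch q a 0 = 1 := by simp [qPoch]

lemma qPoch_succ' (q a : ℝ) (n : ℕ) : qPoch q a (n+1) = (1 - a) * qPoch q (q * a) n := by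
  unfold qPoch
  rw [Finset.prod_range_succ', mul_comm]
  congr 1
  · simp
  · apply Finset.prod_congr rfl
    intro i _
    ring

/-- weighted convolution sum -/
noncomputable def cv (f e : ℕ → ℝ) (n : ℕ) : ℝ := ∑ k ∈ Finset.range (n+1), f k * e (n-k)

lemma cv_lower (q : ℝ) (f e : ℕ → ℝ) (he : ∀ m, (1 - q^(m+1)) * e (m+1) = e m) (n : ℕ) :
    cv (fun k => q^k * f k) e (n+1) - q^(n+1) * cv f e (n+1) = cv (fun k => q^k * f k) e n := by
  unfold cv
  rw [Finset.mul_sum, ← Finset.sum_sub_distrib, Finset.sum_range_succ]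
  rw [show n + 1 - (n+1) = 0 by omega]
  rw [show q ^ (n+1) * f (n+1) * e 0 - q^(n+1) * (f (n+1) * e 0) = 0 by ring, add_zero]
  apply Finset.sum_congr rfl
  intro k hk
  have hk' : k ≤ n := by simpa [Nat.lt_succ_iff] using hk
  obtain ⟨m, rfl⟩ := Nat.exists_eq_add_of_le hk'
  rw [show k + m + 1 - k = m + 1 by omega, show k + m - k = m by omega, ← he m]
  ring

/-- three-term recurrence data -/
lemma cv_rec (q b c : ℝ) (N : ℕ) (j e : ℕ → ℝ)
    (hj : ∀ k, k < N → (1 - q^(k+1)) * (1 - c * q^(k+1)) * j (k+1) = - b * q^(k+1) * j k)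
    (n : ℕ) (hn : n < N) :
    cv j e (n+1) - (1 + c) * cv (fun k => q^k * j k) e (n+1)
      + c * cv (fun k => q^k * (q^k * j k)) e (n+1) = - b * q * cv (fun k => q^k * j k) e n := by
  unfold cv
  rw [Finset.mul_sum, Finset.mul_sum, Finset.mul_sum, ← Finset.sum_sub_distrib,
    ← Finset.sum_add_distrib, Finset.sum_range_succ']
  have : ∀ z : ℝ, j 0 * z - (1 + c) * (q^0 * j 0 * z) + c * (q^0 * (q^0 * j 0) * z) = 0 := by
    intro z; ring
  rw [this, add_zero]
  apply Finset.sum_congr rfl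
  intro k hk
  have hk' : k ≤ n := by simpa [Nat.lt_succ_iff] using hk
  rw [show n + 1 - (k+1) = n - k by omega]
  linear_combination e (n-k) * hj k (by omega)

/-- shifted sequence -/
def shiftS (S : ℕ → ℝ) : ℕ → ℝ
  | 0 => 0
  | n+1 => S n

lemma cv_D (q b c : ℝ) (N : ℕ) (j e : ℕ → ℝ)
    (he : ∀ m, (1 - q^(m+1)) * e (m+1) = e m)
    (hj : ∀ k, k < N → (1 - q^(k+1)) * (1 - c * q^(k+1)) * j (k+1) = - b * q^(k+1) * j k)
    (n : ℕ) (hn : n ≤ N) :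
    (1 - (1 + c) * q^n) * cv j e n - (1 - b * q^n) * shiftS (cv j e) n
      = - c * q^n * cv (fun k => q^k * j k) e n := by
  rcases n with _ | n
  · simp [cv, shiftS]
  · have h3 := cv_rec q b c N j e hj n (by omega)
    have h1 := cv_lower q j e he n
    have h2 := cv_lower q (fun k => q^k * j k) e he n
    simp only [shiftS]
    rcases n with _ | n
    · simp only [cv, zero_add, Finset.sum_range_succ, Finset.sum_range_zero] at *
      simp at *
      linear_combination h3 + (1 + c) * h1 - c * h2
    · have h3' := cv_rec q b c N j e hj n (by omega)
      have h1' := cv_lower q j e he n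
      linear_combination h3 - h3' + (1 + c) * h1 - c * h2 - b * q * h1'

lemma cv_three (q b c : ℝ) (N : ℕ) (j e : ℕ → ℝ)
    (he : ∀ m, (1 - q^(m+1)) * e (m+1) = e m)
    (hj : ∀ k, k < N → (1 - q^(k+1)) * (1 - c * q^(k+1)) * j (k+1) = - b * q^(k+1) * j k)
    (m : ℕ) (hm : m < N) :
    (1 - q^(m+1)) * (1 - c * q^(m+1)) * cv j e (m+1)
      = ((1 + q) - (1 + c + b) * q^(m+1)) * cv j e m
        - q * (1 - b * q^m) * shiftS (cv j e) m := by
  have d1 := cv_D q b c N j e he hj (m+1) (by omega)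
  have d0 := cv_D q b c N j e he hj m (by omega)
  have h1 := cv_lower q j e he m
  simp only [shiftS] at d1
  linear_combination d1 - q * d0 - c * q^(m+1) * h1

lemma main_ind (q A b c y : ℝ) (hq : q ≠ 0) (N : ℕ) (S : ℕ → ℝ)
    (hb : ∀ n, n < N → 1 - q * b * q^n ≠ 0)
    (hS : ∀ m, m < N → (1 - q^(m+1)) * (1 - c * q^(m+1)) * S (m+1)
      = ((1 + q) - (1 + c + b) * q^(m+1)) * S m - q * (1 - b * q^m) * shiftS S m)
    (F : ℕ → ℝ → ℝ)
    (hF : ∀ M z, F M z = ∑ n ∈ Finset.range (M+1),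
      qPoch q z n * (qPoch q A n / qPoch q (q*b) n) * q^n * S n)
    (M : ℕ) (hM : M ≤ N) :
    (q*c - y) * (q*b - y) * F M (y/q) - A^2 * q * y * ((1-y) * F M (q*y))
      - (q^2*b*c - A*q*y*(b+c+1) + A*(q+1)*y^2) * F M y
    = (qPoch q A M / qPoch q (q*b) M) * q^M * y * qPoch q y M * (1 - A * q^M) / (q^M)^2 *
      (((1 + q) - (1 + c + b) * q^(M+1)) * S M - q * (1 - b * q^M) * shiftS S M
        - (1 - A * q * q^M) * (1 - y * q^M) * S M) := by
  induction M with
  | zero =>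
    simp only [hF, zero_add, Finset.sum_range_one, qPoch_zero, shiftS]
    field_simp
    ring
  | succ M ih =>
    have ih := ih (by omega)
    have hstep : ∀ z, F (M+1) z = F M z +
        qPoch q z (M+1) * (qPoch q A (M+1) / qPoch q (q*b) (M+1)) * q^(M+1) * S (M+1) := by
      intro z
      rw [hF, hF, Finset.sum_range_succ _ (M+1)]
    have e1 : qPoch q (y/q) (M+1) = (1 - y/q) * qPoch q y M := by
      rw [qPoch_succ']; congr 2; field_simp
    have e2 : (1 - y) * qPoch q (q*y) (M+1) = qPoch q y M * (1 - y*q^M) * (1 - y * q^(M+1)) := by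
      rw [← qPoch_succ', qPoch_succ, qPoch_succ]
    have e3 := qPoch_succ q y M
    have hw : qPoch q A (M+1) / qPoch q (q*b) (M+1) =
        (qPoch q A M / qPoch q (q*b) M) * ((1 - A * q^M) / (1 - q*b*q^M)) := by
      rw [qPoch_succ, qPoch_succ, mul_div_mul_comm]
    have hb' := hb M (by omega)
    have hs := hS M (by omega)
    have hQ : q^M ≠ 0 := pow_ne_zero _ hq
    have hmid : (1 - y) * F (M+1) (q*y) = (1-y) * F M (q*y) +
        (qPoch q y M * (1 - y*q^M) * (1 - y * q^(M+1))) *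
          (qPoch q A (M+1) / qPoch q (q*b) (M+1)) * q^(M+1) * S (M+1) := by
      rw [hstep, ← e2]; ring
    rw [hmid, hstep, hstep, e1, e3, hw]
    simp only [shiftS]
    generalize qPoch q A M / qPoch q (q*b) M = W at *
    generalize qPoch q y M = p at *
    generalize S (M+1) = s1 at *
    generalize shiftS S M = s' at *
    generalize S M = s at *
    have hlin : ∀ X1 X2 X3 Y1 Y2 Y3 R : ℝ,
      (q*c - y) * (q*b - y) * X1 - A^2 * q * y * X2
      - (q^2*b*c - A*q*y*(b+c+1) + A*(q+1)*y^2) * X3 = R →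
      ∀ T, R + ((q*c - y) * (q*b - y) * Y1 - A^2 * q * y * Y2
      - (q^2*b*c - A*q*y*(b+c+1) + A*(q+1)*y^2) * Y3) = T →
      (q*c - y) * (q*b - y) * (X1 + Y1) - A^2 * q * y * (X2 + Y2)
      - (q^2*b*c - A*q*y*(b+c+1) + A*(q+1)*y^2) * (X3 + Y3) = T := by
      intro X1 X2 X3 Y1 Y2 Y3 R h T h'
      linear_combination h + h'
    apply hlin _ _ _ _ _ _ _ ih
    simp only [pow_succ] at hs ⊢
    generalize q^M = Q at *
    rw [← hs]
    obtain ⟨W', hW⟩ : ∃ W', W = W' * (1 - q * b * Q) := ⟨W / (1 - q * b * Q), by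
      rw [div_mul_cancel₀ _ hb']⟩
    have hW2 : W * ((1 - A * Q) / (1 - q * b * Q)) = W' * (1 - A * Q) := by
      rw [hW, mul_assoc, mul_div_cancel₀ _ hb']
    rw [hW2, hW]
    clear hlin hW2 hW hb' hw e1 e2 e3 hmid ih hstep
    field_simp
    ring
theorem stmt13 (q h₁ l₁ l₂ α₁ lam t₁ t₂ : ℝ) (N : ℕ)
    (hq : 0 < q) (hq1 : q ≠ 1) (ht₁ : t₁ ≠ 0) (ht₂ : t₂ ≠ 0)
    (hN : 0 < N) (hNlam : lam + α₁ = -(N : ℝ))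
    (hden₁ : ∀ n : ℕ, 1 ≤ n → n ≤ N → q ^ (h₁ - l₂ + (n : ℝ)) * t₁ / t₂ ≠ 1)
    (hden₂ : ∀ k : ℕ, 1 ≤ k → k ≤ N → q ^ (h₁ - l₁ + (k : ℝ)) ≠ 1) :
    confEq21 q h₁ l₁ l₂ α₁ lam t₁ t₂ (fun x =>
      x ^ (-α₁) * ∑ n ∈ Finset.range (N + 1),
        qPoch q (q ^ (h₁ + 1/2) * t₁ / x) n *
            (qPoch q (q ^ (lam + α₁)) n / qPoch q (q ^ (h₁ - l₂ + 1) * t₁ / t₂) n) * q ^ n *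
          ∑ k ∈ Finset.range (n + 1),
            q ^ ((k : ℝ) * ((k : ℝ) + 1) / 2) * (-(q ^ (h₁ - l₂) * t₁ / t₂)) ^ k /
              (qPoch q (q ^ (h₁ - l₁ + 1)) k * qPoch q q k * qPoch q q (n - k))) := by
  intro x hx
  have hq0 : q ≠ 0 := hq.ne'
  have hqp : ∀ m : ℕ, 1 - q^(m+1) ≠ 0 := by
    intro m h
    have : q^(m+1) = 1 := by linarith
    exact hq1 ((pow_eq_one_iff_of_nonneg hq.le (Nat.succ_ne_zero m)).1 this)
  obtain ⟨A, hA⟩ : ∃ A, A = q ^ (lam + α₁) := ⟨_, rfl⟩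
  obtain ⟨b, hb⟩ : ∃ b, b = q ^ (h₁ - l₂) * t₁ / t₂ := ⟨_, rfl⟩
  obtain ⟨c, hc⟩ : ∃ c, c = q ^ (h₁ - l₁) := ⟨_, rfl⟩
  have hqb : q ^ (h₁ - l₂ + 1) * t₁ / t₂ = q * b := by
    rw [hb, Real.rpow_add hq, Real.rpow_one]; ring
  have hqc : q ^ (h₁ - l₁ + 1) = q * c := by
    rw [hc, Real.rpow_add hq, Real.rpow_one]; ring
  have hdb : ∀ n, n < N → 1 - q * b * q^n ≠ 0 := by
    intro n hn h
    apply hden₁ (n+1) (by omega) (by omega)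
    rw [Real.rpow_add hq, Real.rpow_natCast, pow_succ]
    rw [hb] at h
    linear_combination -h
  have hdc : ∀ n, n < N → 1 - c * q^(n+1) ≠ 0 := by
    intro n hn h
    apply hden₂ (n+1) (by omega) (by omega)
    rw [Real.rpow_add hq, Real.rpow_natCast, ← hc]
    linear_combination -h
  obtain ⟨e, he⟩ : ∃ e : ℕ → ℝ, e = fun m => 1 / qPoch q q m := ⟨_, rfl⟩
  obtain ⟨j, hj⟩ : ∃ j : ℕ → ℝ, j = fun k : ℕ => q ^ ((k : ℝ) * ((k : ℝ) + 1) / 2) * (-b) ^ k /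
      (qPoch q (q * c) k * qPoch q q k) := ⟨_, rfl⟩
  have hqq : ∀ m, 1 - q * q^m ≠ 0 := by
    intro m; have := hqp m; rwa [pow_succ'] at this
  have herec : ∀ m, (1 - q^(m+1)) * e (m+1) = e m := by
    intro m
    have := hqq m
    simp only [he, qPoch_succ, pow_succ']
    rw [← div_div, mul_div_cancel₀ _ this]
  have hjrec : ∀ k, k < N →
      (1 - q^(k+1)) * (1 - c * q^(k+1)) * j (k+1) = - b * q^(k+1) * j k := by
    intro k hk
    have h1 := hqq k
    have h2 : 1 - q * c * q^k ≠ 0 := by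
      have := hdc k hk
      rwa [show c * q^(k+1) = q * c * q^k by ring] at this
    have hexp : q ^ (((k+1 : ℕ) : ℝ) * (((k+1 : ℕ) : ℝ) + 1) / 2)
        = q ^ ((k : ℝ) * ((k : ℝ) + 1) / 2) * q^(k+1) := by
      rw [← Real.rpow_natCast q (k+1), ← Real.rpow_add hq]
      congr 1
      push_cast
      ring
    simp only [hj]
    rw [hexp, qPoch_succ, qPoch_succ]
    generalize q ^ ((k : ℝ) * ((k : ℝ) + 1) / 2) = E
    rw [show qPoch q (q*c) k * (1 - q*c*q^k) * (qPoch q q k * (1 - q*q^k)) =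
      (qPoch q (q*c) k * qPoch q q k) * ((1 - q*c*q^k) * (1 - q*q^k)) by ring, ← div_div]
    rw [show (1 - q^(k+1)) * (1 - c * q^(k+1)) = (1 - q*c*q^k) * (1 - q*q^k) by ring]
    rw [mul_div_cancel₀ _ (mul_ne_zero h2 h1)]
    ring
  obtain ⟨F, hF⟩ : ∃ F : ℕ → ℝ → ℝ, F = fun M z => ∑ n ∈ Finset.range (M+1),
      qPoch q z n * (qPoch q A n / qPoch q (q*b) n) * q^n * cv j e n := ⟨_, rfl⟩
  have hS := cv_three q b c N j e herec hjrec
  obtain ⟨y, hy⟩ : ∃ y, y = q ^ (h₁ + 1/2) * t₁ / x := ⟨_, rfl⟩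
  have key := main_ind q A b c y hq0 N (cv j e) hdb hS F (by intro M z; rw [hF]) N le_rfl
  have hAN : 1 - A * q^N = 0 := by
    rw [hA, hNlam, ← Real.rpow_natCast q N, ← Real.rpow_add hq]
    simp
  rw [hAN] at key
  have hcv : ∀ n, ∑ k ∈ Finset.range (n + 1),
            q ^ ((k : ℝ) * ((k : ℝ) + 1) / 2) * (-b) ^ k /
              (qPoch q (q*c) k * qPoch q q k * qPoch q q (n - k)) = cv j e n := by
    intro n
    unfold cv
    apply Finset.sum_congr rfl
    intro k _
    simp only [hj, he]
    rw [div_mul_div_comm, mul_one]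
  simp only [← hA, ← hb, hqb, hqc, hcv]
  have hFN : ∀ z, ∑ n ∈ Finset.range (N+1),
      qPoch q z n * (qPoch q A n / qPoch q (q*b) n) * q^n * cv j e n = F N z := by
    intro z; rw [hF]
  simp only [hFN]
  rw [show q ^ (h₁ + 1/2) * t₁ / (q * x) = y / q by rw [hy]; field_simp,
    show q ^ (h₁ + 1/2) * t₁ / (x / q) = q * y by rw [hy]; field_simp, ← hy]
  rw [Real.mul_rpow hq.le hx.le, Real.div_rpow hx.le hq.le]
  generalize F N (y/q) = f1 at *
  generalize F N (q*y) = f2 at *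
  generalize F N y = f3 at *
  generalize x ^ (-α₁) = X at *
  have hlam : q ^ lam = A / q ^ α₁ := by
    rw [hA, Real.rpow_add hq]; field_simp
  have k1 : q ^ (l₁ - 1/2) = q ^ l₁ / q ^ (1/2 : ℝ) := Real.rpow_sub hq _ _
  have k2 : q ^ (l₂ - 1/2) = q ^ l₂ / q ^ (1/2 : ℝ) := Real.rpow_sub hq _ _
  have k3 : q ^ (-h₁ + l₁ + l₂ + 2 * lam - 1/2)
      = q ^ l₁ * q ^ l₂ * (A / q^α₁)^2 / (q ^ h₁ * q ^ (1/2 : ℝ)) := by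
    rw [← hlam, Real.rpow_sub hq, Real.rpow_add hq, Real.rpow_add hq, Real.rpow_add hq,
      Real.rpow_neg hq.le, two_mul, Real.rpow_add hq]
    field_simp
  have k4 : q ^ (h₁ + 1/2) = q ^ h₁ * q ^ (1/2 : ℝ) := Real.rpow_add hq _ _
  have k5 : q ^ (l₁ + l₂ + lam - 1/2) = q ^ l₁ * q ^ l₂ * (A / q^α₁) / q ^ (1/2 : ℝ) := by
    rw [← hlam, Real.rpow_sub hq, Real.rpow_add hq, Real.rpow_add hq]
  have k6 : q ^ (l₁ + l₂ + lam) = q ^ l₁ * q ^ l₂ * (A / q^α₁) := by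
    rw [← hlam, Real.rpow_add hq, Real.rpow_add hq]
  have hs : q = (q ^ (1/2 : ℝ))^2 := by
    rw [← Real.rpow_natCast, ← Real.rpow_mul hq.le]; norm_num
  rw [Real.rpow_sub hq] at hb hc
  rw [k4] at hy
  rw [k1, k2, k3, k4, k5, k6, Real.rpow_neg hq.le, Real.rpow_neg hq.le, Real.rpow_neg hq.le,
    Real.rpow_neg hq.le]
  have p1 := (Real.rpow_pos_of_pos hq l₁).ne'
  have p2 := (Real.rpow_pos_of_pos hq l₂).ne'
  have p3 := (Real.rpow_pos_of_pos hq h₁).ne'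
  have p4 := (Real.rpow_pos_of_pos hq α₁).ne'
  have p5 := (Real.rpow_pos_of_pos hq (1/2)).ne'
  clear hF hS hj he hjrec herec hcv hFN hdb hdc hden₁ hden₂ hqb hqc k1 k2 k3 k4 k5 k6 hlam hA hAN
  clear hqp hqq hNlam
  generalize q ^ l₁ = L1 at *
  generalize q ^ l₂ = L2 at *
  generalize q ^ h₁ = H at *
  generalize q ^ α₁ = a at *
  generalize q ^ (1/2 : ℝ) = s at *
  have key2 : (q*c - y) * (q*b - y) * f1 - A^2 * q * y * ((1-y) * f2)
      - (q^2*b*c - A*q*y*(b+c+1) + A*(q+1)*y^2) * f3 = 0 := by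
    rw [key]; ring
  clear key
  have hx0 := hx.ne'
  have hb0 : b ≠ 0 := by rw [hb]; positivity
  have hc0 : c ≠ 0 := by rw [hc]; positivity
  have hfin : X / a * x^2 / (q^2 * b * c) * ((q*c - y) * (q*b - y) * f1
      - A^2 * q * y * ((1-y) * f2)
      - (q^2*b*c - A*q*y*(b+c+1) + A*(q+1)*y^2) * f3) = 0 := by rw [key2, mul_zero]
  rw [← hfin, hb, hc, hy, hs]
  field_simp
  ring
end

section
/- Let q be a real number with 0 < q and q ≠ 1, let l₁, l₂, α₁, λ be real numbers and t₁, t₂ nonzero reals, and let (i,i') = (1,2) or (i,i') = (2,1). Assume λ + α₁ = -N for some positive integer N (so (q^{λ+α₁};q)_n = 0 for all n > N and the series below is a finite sum). Then the function g(x) = x^{λ} · Σ_{n=0}^{N} (-q^{-λ-α₁+l_i-l_{i'}}·t_i/t_{i'})^n · q^{-n(n-1)/2} · [(q^{λ+α₁};q)_n / (q;q)_n] · (x/(q^{l_i-1/2}t_i);q)_n satisfies the variant of the confluent q-hypergeometric equation of type (2,0) for all x > 0. -/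
/-- The variant of the confluent q-hypergeometric equation of type (2,0) (for `x > 0`). -/
def confEq20 (q l₁ l₂ α₁ lam t₁ t₂ : ℝ) (g : ℝ → ℝ) : Prop :=
  ∀ x : ℝ, 0 < x →
    q ^ (-2 * lam - 1) * (1 - q ^ (-l₁ + 1/2) * t₁⁻¹ * x) * (1 - q ^ (-l₂ + 1/2) * t₂⁻¹ * x)
        * g (q * x)
    + g (x / q)
    - (q ^ (-α₁ - l₁ - l₂ - 2 * lam) * t₁⁻¹ * t₂⁻¹ * x ^ 2
        - q ^ (-lam - 1/2) * (q ^ (-l₁) * t₁⁻¹ + q ^ (-l₂) * t₂⁻¹) * x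
        + q ^ (-lam) * (1 + q⁻¹)) * g x = 0

lemma qPoch_succ_right (q a : ℝ) (n : ℕ) :
    qPoch q a (n + 1) = qPoch q a n * (1 - a * q ^ n) := by
  simp [qPoch, Finset.prod_range_succ]

lemma qPoch_succ_left (q a : ℝ) (n : ℕ) :
    qPoch q a (n + 1) = (1 - a) * qPoch q (q * a) n := by
  unfold qPoch
  rw [Finset.prod_range_succ', mul_comm]
  congr 1
  · simp
  · apply Finset.prod_congr rfl
    intro i _
    ring

lemma qPoch_self_ne (q : ℝ) (hq : 0 < q) (hq1 : q ≠ 1) (n : ℕ) : qPoch q q n ≠ 0 := by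
  unfold qPoch
  rw [Finset.prod_ne_zero_iff]
  intro i _ h
  have h2 : q ^ (i + 1) = 1 := by rw [pow_succ]; linarith
  rw [pow_eq_one_iff_of_nonneg hq.le (by omega)] at h2
  exact hq1 h2

lemma core_sum (q y c A : ℝ) (hq : 0 < q) (hA : A ≠ 0) (a : ℕ → ℝ)
    (ha : ∀ n, A * q ^ n * (1 - q ^ (n + 1)) * a (n + 1) = -c * (1 - A * q ^ n) * a n) (k : ℕ) :
    ∑ n ∈ Finset.range (k + 1), a n * ((1 - y) * (1 - c * y) * qPoch q (q * y) n
      + q * qPoch q (y / q) n - (A⁻¹ * c * y ^ 2 - (1 + c) * y + q + 1) * qPoch q y n)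
      = y ^ 2 * qPoch q y k * q ^ k * (1 - q ^ (k + 1)) * a (k + 1) := by
  have ha' : ∀ n, q ^ n * (1 - q ^ (n + 1)) * a (n + 1) = -c * (A⁻¹ - q ^ n) * a n := by
    intro n
    have := ha n
    apply mul_left_cancel₀ hA
    have h1 : A * A⁻¹ = 1 := mul_inv_cancel₀ hA
    linear_combination this + c * a n * h1
  induction k with
  | zero =>
    have h := ha' 0
    simp [qPoch] at h ⊢
    linear_combination -y ^ 2 * h
  | succ k ih =>
    rw [Finset.sum_range_succ, ih]
    have h := ha' (k + 1)
    have h1 : (1 - y) * qPoch q (q * y) (k + 1)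
        = qPoch q y k * (1 - y * q ^ k) * (1 - y * q ^ (k + 1)) := by
      rw [← qPoch_succ_left, qPoch_succ_right, qPoch_succ_right]
    have h2 : q * qPoch q (y / q) (k + 1) = (q - y) * qPoch q y k := by
      rw [qPoch_succ_left, mul_div_cancel₀ _ hq.ne']
      field_simp
    rw [h2, qPoch_succ_right q y k]
    linear_combination a (k + 1) * (1 - c * y) * h1
      - y ^ 2 * qPoch q y k * (1 - y * q ^ k) * h

lemma main_case (q l₁ l₂ α₁ lam t₁ t₂ : ℝ) (N : ℕ)
    (hq : 0 < q) (hq1 : q ≠ 1) (ht₁ : t₁ ≠ 0) (ht₂ : t₂ ≠ 0)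
    (hNlam : lam + α₁ = -(N : ℝ)) :
    confEq20 q l₁ l₂ α₁ lam t₁ t₂ (fun x =>
      x ^ lam * ∑ n ∈ Finset.range (N + 1),
        (-(q ^ (-lam - α₁ + l₁ - l₂) * t₁ / t₂)) ^ n * q ^ (-(n : ℝ) * ((n : ℝ) - 1) / 2) *
          (qPoch q (q ^ (lam + α₁)) n / qPoch q q n) *
          qPoch q (x / (q ^ (l₁ - 1/2) * t₁)) n) := by
  intro x hx
  obtain ⟨A, hAdef⟩ : ∃ A, A = q ^ (lam + α₁) := ⟨_, rfl⟩
  obtain ⟨c, hc⟩ : ∃ c, c = q ^ (l₁ - l₂) * t₁ / t₂ := ⟨_, rfl⟩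
  obtain ⟨y, hy⟩ : ∃ y, y = x / (q ^ (l₁ - 1/2) * t₁) := ⟨_, rfl⟩
  obtain ⟨a, hadef⟩ : ∃ a : ℕ → ℝ, a = fun n : ℕ => (-(q ^ (-lam - α₁ + l₁ - l₂) * t₁ / t₂)) ^ n *
    q ^ (-(n : ℝ) * ((n : ℝ) - 1) / 2) * (qPoch q (q ^ (lam + α₁)) n / qPoch q q n) := ⟨_, rfl⟩
  have hA : A ≠ 0 := by rw [hAdef]; positivity
  have hcA : q ^ (-lam - α₁ + l₁ - l₂) * t₁ / t₂ = c * A⁻¹ := by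
    rw [hc, hAdef, ← Real.rpow_neg hq.le,
      show -lam - α₁ + l₁ - l₂ = (l₁ - l₂) + -(lam + α₁) by ring, Real.rpow_add hq]
    ring
  have ha : ∀ n, A * q ^ n * (1 - q ^ (n + 1)) * a (n + 1) = -c * (1 - A * q ^ n) * a n := by
    intro n
    simp only [hadef]
    rw [hcA, ← hAdef, qPoch_succ_right, qPoch_succ_right]
    have hp : q ^ (-((n + 1 : ℕ) : ℝ) * (((n + 1 : ℕ) : ℝ) - 1) / 2)
        = q ^ (-(n : ℝ) * ((n : ℝ) - 1) / 2) * (q ^ n)⁻¹ := by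
      rw [← Real.rpow_natCast q n, ← Real.rpow_neg hq.le, ← Real.rpow_add hq]
      congr 1
      push_cast
      ring
    have hn0 := qPoch_self_ne q hq hq1 n
    have hn1 := qPoch_self_ne q hq hq1 (n + 1)
    rw [qPoch_succ_right] at hn1
    have hn2 := right_ne_zero_of_mul hn1
    have hqn : q ^ n ≠ 0 := by positivity
    rw [hp, pow_succ (-(c * A⁻¹)), show q ^ (n + 1) = q * q ^ n by ring]
    generalize q ^ (-(n : ℝ) * ((n : ℝ) - 1) / 2) = r
    generalize (-(c * A⁻¹)) ^ n = s
    generalize qPoch q q n = u at *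
    generalize q ^ n = v at *
    have hn3 : 1 - v * q ≠ 0 := by rwa [mul_comm v q]
    field_simp
  have hAN : A * q ^ N = 1 := by
    rw [hAdef, hNlam, ← Real.rpow_natCast q N, ← Real.rpow_add hq]
    simp
  have hend : a (N + 1) = 0 := by
    simp only [hadef]
    rw [← hAdef, qPoch_succ_right, hAN]
    simp
  have key := core_sum q y c A hq hA a ha N
  rw [hend, mul_zero] at key
  have hy1 : q * x / (q ^ (l₁ - 1/2) * t₁) = q * y := by rw [hy]; ring
  have hy2 : x / q / (q ^ (l₁ - 1/2) * t₁) = y / q := by rw [hy]; ring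
  have e1 : q ^ (-l₁ + 1/2) * t₁⁻¹ * x = y := by
    rw [hy, show -l₁ + 1/2 = -(l₁ - 1/2) by ring, Real.rpow_neg hq.le]
    field_simp
  have e2 : q ^ (-l₂ + 1/2) * t₂⁻¹ * x = c * y := by
    rw [← e1, hc, show -l₂ + 1/2 = (l₁ - l₂) + (-l₁ + 1/2) by ring, Real.rpow_add hq]
    field_simp
  have f1 : q ^ (-α₁ - l₁ - l₂ - 2 * lam) * t₁⁻¹ * t₂⁻¹ * x ^ 2
      = q ^ (-lam) * q⁻¹ * (A⁻¹ * c * y ^ 2) := by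
    have : A⁻¹ * c * y ^ 2 = A⁻¹ * (q ^ (-l₁ + 1/2) * t₁⁻¹ * x) * (q ^ (-l₂ + 1/2) * t₂⁻¹ * x) := by
      rw [e1, e2]; ring
    rw [this, hAdef, ← Real.rpow_neg hq.le, ← Real.rpow_neg_one q,
      show -α₁ - l₁ - l₂ - 2 * lam
        = -lam + (-1) + (-(lam + α₁)) + (-l₁ + 1/2) + (-l₂ + 1/2) by ring,
      Real.rpow_add hq, Real.rpow_add hq, Real.rpow_add hq, Real.rpow_add hq]
    ring
  have f2 : q ^ (-lam - 1/2) * (q ^ (-l₁) * t₁⁻¹ + q ^ (-l₂) * t₂⁻¹) * x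
      = q ^ (-lam) * q⁻¹ * ((1 + c) * y) := by
    have : (1 + c) * y = (q ^ (-l₁ + 1/2) * t₁⁻¹ * x) + (q ^ (-l₂ + 1/2) * t₂⁻¹ * x) := by
      rw [e1, e2]; ring
    rw [this, ← Real.rpow_neg_one q, show -lam - 1/2 = -lam + (-1) + 1/2 by ring,
      Real.rpow_add hq, Real.rpow_add hq, Real.rpow_add hq, Real.rpow_add hq]
    ring
  have f3 : q ^ (-2 * lam - 1) = q ^ (-lam) * q ^ (-lam) * q⁻¹ := by
    rw [← Real.rpow_neg_one q, ← Real.rpow_add hq, ← Real.rpow_add hq]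
    congr 1; ring
  have g1 : (q * x) ^ lam = q ^ lam * x ^ lam := Real.mul_rpow hq.le hx.le
  have g2 : (x / q) ^ lam = q ^ (-lam) * x ^ lam := by
    rw [Real.div_rpow hx.le hq.le, Real.rpow_neg hq.le]; ring
  have g3 : q ^ (-lam) * q ^ lam = 1 := by rw [← Real.rpow_add hq]; simp
  have hs : ∀ z, ∑ n ∈ Finset.range (N + 1),
        (-(q ^ (-lam - α₁ + l₁ - l₂) * t₁ / t₂)) ^ n * q ^ (-(n : ℝ) * ((n : ℝ) - 1) / 2) *
          (qPoch q (q ^ (lam + α₁)) n / qPoch q q n) * qPoch q z n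
        = ∑ n ∈ Finset.range (N + 1), a n * qPoch q z n := by
    intro z; rw [hadef]
  have key2 : (1 - y) * (1 - c * y) * ∑ n ∈ Finset.range (N + 1), a n * qPoch q (q * y) n
      + q * ∑ n ∈ Finset.range (N + 1), a n * qPoch q (y / q) n
      - (A⁻¹ * c * y ^ 2 - (1 + c) * y + q + 1) * ∑ n ∈ Finset.range (N + 1), a n * qPoch q y n
      = 0 := by
    rw [← key, Finset.mul_sum, Finset.mul_sum, Finset.mul_sum, ← Finset.sum_add_distrib,
      ← Finset.sum_sub_distrib]
    apply Finset.sum_congr rfl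
    intro n _
    ring
  beta_reduce
  rw [hy1, hy2, ← hy, hs, hs, hs, e1, e2, f1, f2, f3, g1, g2]
  have g4 : q⁻¹ * q = 1 := inv_mul_cancel₀ hq.ne'
  generalize ∑ n ∈ Finset.range (N + 1), a n * qPoch q (q * y) n = S1 at *
  generalize ∑ n ∈ Finset.range (N + 1), a n * qPoch q (y / q) n = S2 at *
  generalize ∑ n ∈ Finset.range (N + 1), a n * qPoch q y n = S3 at *
  linear_combination q ^ (-lam) * q⁻¹ * x ^ lam * key2
    + q ^ (-lam) * q⁻¹ * (1 - y) * (1 - c * y) * x ^ lam * S1 * g3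
    + q ^ (-lam) * x ^ lam * (S3 - S2) * g4

lemma confEq20_symm {q l₁ l₂ α₁ lam t₁ t₂ : ℝ} {g : ℝ → ℝ}
    (h : confEq20 q l₂ l₁ α₁ lam t₂ t₁ g) : confEq20 q l₁ l₂ α₁ lam t₁ t₂ g := by
  intro x hx
  have := h x hx
  rw [show -α₁ - l₁ - l₂ - 2 * lam = -α₁ - l₂ - l₁ - 2 * lam by ring]
  linear_combination this

theorem stmt15 (q l₁ l₂ α₁ lam t₁ t₂ lᵢ lᵢ' tᵢ tᵢ' : ℝ) (N : ℕ)
    (hq : 0 < q) (hq1 : q ≠ 1) (ht₁ : t₁ ≠ 0) (ht₂ : t₂ ≠ 0)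
    (hidx : (lᵢ, lᵢ', tᵢ, tᵢ') = (l₁, l₂, t₁, t₂) ∨ (lᵢ, lᵢ', tᵢ, tᵢ') = (l₂, l₁, t₂, t₁))
    (hN : 0 < N) (hNlam : lam + α₁ = -(N : ℝ)) :
    confEq20 q l₁ l₂ α₁ lam t₁ t₂ (fun x =>
      x ^ lam * ∑ n ∈ Finset.range (N + 1),
        (-(q ^ (-lam - α₁ + lᵢ - lᵢ') * tᵢ / tᵢ')) ^ n * q ^ (-(n : ℝ) * ((n : ℝ) - 1) / 2) *
          (qPoch q (q ^ (lam + α₁)) n / qPoch q q n) *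
          qPoch q (x / (q ^ (lᵢ - 1/2) * tᵢ)) n) := by
  rcases hidx with h | h
  · simp only [Prod.mk.injEq] at h
    obtain ⟨rfl, rfl, rfl, rfl⟩ := h
    exact main_case _ _ _ _ _ _ _ N hq hq1 ht₁ ht₂ hNlam
  · simp only [Prod.mk.injEq] at h
    obtain ⟨rfl, rfl, rfl, rfl⟩ := h
    exact confEq20_symm (main_case _ _ _ _ _ _ _ N hq hq1 ht₂ ht₁ hNlam)
end
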